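/- arXiv:2102.06889 — 2 statements merged into one kernel-verified Lean document; each statement's English description precedes it below -/
import Mathlib

section
/- Let G = (V, →, c) be a game where V is a countable set of vertices partitioned into demonic vertices V_D and angelic vertices V_A, → ⊆ V × V is a finitely-branching transition relation (every vertex has only finitely many successors), and c : V → ℕ is a cost function; fix an initial vertex v̂ ∈ V. Then sup_π inf_σ mmax[c](α^{σ,π}) = inf_σ sup_π mmax[c](α^{σ,π}), where π ranges over Demon strategies, σ over Angel strategies, and both sides are evaluated in ℕ∞. -/
/-!
For a threshold `b`, let `W` be Demon's attractor of `{v | b < c v}`, the least fixed point that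
collects the vertices from which Demon can force a visit to this set. Where Angel has infinitely
many moves, a vertex may enter `W` only after all finite stages of the iteration; but the stage is
still an ordinal, which Demon can decrease with every move, so from `W` he reaches a cost above `b`.
Outside `W`, Angel can always avoid entering `W`, so no cost above `b` is ever seen. Hence for every
threshold `b` either one strategy of Demon guarantees more than `b`, or one strategy of Angel
guarantees at most `b`, which leaves no room for a gap between the lower and the upper value.
-/

open scoped Classical

namespace VassPaperGames

noncomputable section

/-- A game `G = (V, →, c)`: a countable set of vertices partitioned into demonic and angelic
ones (via the predicate `demonic`), a finitely-branching transition relation, and a cost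
function. -/
structure CGame where
  V : Type
  [cnt : Countable V]
  demonic : V → Prop
  R : V → V → Prop
  finBranch : ∀ v : V, {u | R v u}.Finite
  cost : V → ℕ

attribute [instance] CGame.cnt

/-- A strategy for the player owning the vertices in `own`: it assigns to every finite path
(represented by its strict past `h` and current vertex `v`) a successor of `v`, whenever
`v` has at least one successor. -/
structure GStrategy (G : CGame) (own : G.V → Prop) where
  choose : List G.V → G.V → G.V
  choose_succ : ∀ h v, own v → (∃ u, G.R v u) → G.R v (choose h v)

abbrev GAngelStrategy (G : CGame) := GStrategy G (fun v => ¬ G.demonic v)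
abbrev GDemonStrategy (G : CGame) := GStrategy G G.demonic

/-- The maximal path `α^{σ,π}` from `init`: `gplayAux σ π init n` is (the history together
with) the `n`-th vertex, or `none` if the path has already ended (in a vertex without
successors). -/
def gplayAux {G : CGame} (σ : GAngelStrategy G) (π : GDemonStrategy G) (init : G.V) :
    ℕ → Option (List G.V × G.V)
  | 0 => some ([], init)
  | n+1 => (gplayAux σ π init n).bind fun hv =>
      if ∃ u, G.R hv.2 u then
        some (hv.1 ++ [hv.2],
          if G.demonic hv.2 then π.choose hv.1 hv.2 else σ.choose hv.1 hv.2)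
      else none

/-- `mmax[c](α^{σ,π})`: the supremum of the costs of the vertices visited by the maximal
path `α^{σ,π}` from `init`. -/
def gmmax {G : CGame} (σ : GAngelStrategy G) (π : GDemonStrategy G) (init : G.V) : ℕ∞ :=
  ⨆ v ∈ {v : G.V | ∃ n h, gplayAux σ π init n = some (h, v)}, ((G.cost v : ℕ) : ℕ∞)

/-- The Bellman operator `Γ`: `Γ(f)(v) = max{c(v), max/min of f over the successors of v}`
(demonic: max, angelic: min), with `Γ(f)(v) = c(v)` for terminal `v`. -/
def Gamma (G : CGame) (f : G.V → ℕ∞) : G.V → ℕ∞ := fun v =>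
  if ∃ u, G.R v u then
    ((G.cost v : ℕ) : ℕ∞) ⊔
      (if G.demonic v then ⨆ u ∈ {u | G.R v u}, f u else ⨅ u ∈ {u | G.R v u}, f u)
  else ((G.cost v : ℕ) : ℕ∞)

/-- A memoryless (positional) strategy: its choice depends only on the current vertex. -/
def GMemoryless {G : CGame} {own : G.V → Prop} (s : GStrategy G own) : Prop :=
  ∀ h h' v, s.choose h v = s.choose h' v

theorem iSup_iInf_eq_iInf_iSup_of_threshold {ι κ L : Type*} [CompleteLinearOrder L]
    (f : ι → κ → L) (h : ∀ b, (∃ i, ∀ j, b < f i j) ∨ ∃ j, ∀ i, f i j ≤ b) :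
    ⨆ i, ⨅ j, f i j = ⨅ j, ⨆ i, f i j := by
  refine (iSup_iInf_le_iInf_iSup f).antisymm (not_lt.1 fun hlt => ?_)
  -- `hab` says that no value lies strictly between `b` and `a`, so `b < f i j` entails `a ≤ f i j`.
  obtain ⟨a, ha, b, hb, hab⟩ := hlt.exists_disjoint_Iio_Ioi
  rcases h b with ⟨i, hi⟩ | ⟨j, hj⟩
  · have ha_le : ∀ j, a ≤ f i j := fun j => not_lt.1 fun hj => (hab _ hj _ (hi j)).false
    exact ha.not_ge (le_iSup_of_le i (le_iInf ha_le))
  · exact hb.not_ge (iInf_le_of_le j (iSup_le hj))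

theorem iSup_iInf_eq_iInf_iSup_of_surjective {ι ι' κ κ' L : Type*} [CompleteLattice L]
    {f : ι → κ → L} {f' : ι' → κ' → L} {p : ι → ι'} {q : κ → κ'} (hp : p.Surjective)
    (hq : q.Surjective) (hf : ∀ i j, f' (p i) (q j) = f i j)
    (hf' : ⨆ i, ⨅ j, f' i j = ⨅ j, ⨆ i, f' i j) : ⨆ i, ⨅ j, f i j = ⨅ j, ⨆ i, f i j :=
  calc
    _ = ⨆ i, ⨅ j, f' i j := hp.iSup_congr p fun i => .symm <| hq.iInf_congr q fun j => hf i j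
    _ = ⨅ j, ⨆ i, f' i j := hf'
    _ = _ := .symm <| hq.iInf_congr q fun j => .symm <| hp.iSup_congr p fun i => hf i j

open OrdinalApprox in
theorem exists_ordinal_rank_of_lfp.{u} {α : Type u} (f : Set α →o Set α) :
    ∃ r : α → Ordinal.{u}, ∀ a ∈ f.lfp, a ∈ f {b ∈ f.lfp | r b < r a} := by
  let stage := lfpApprox f ⊥
  let r : α → Ordinal.{u} := fun a => sInf {o | a ∈ stage o}
  have r_le {a o} (ha : a ∈ stage o) : r a ≤ o := csInf_le' ha
  have mem_stage_r {a} (ha : a ∈ f.lfp) : a ∈ stage (r a) := by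
    obtain ⟨o, ho⟩ := lfp_mem_range_lfpApprox f
    exact csInf_mem (s := {o | a ∈ stage o}) ⟨o, ho.symm.subset ha⟩
  refine ⟨r, fun a ha => ?_⟩
  obtain ⟨o, ho, hao⟩ : ∃ o < r a, a ∈ f (stage o) := by
    have hstage := mem_stage_r ha
    simp only [stage] at hstage
    rw [lfpApprox, bot_sup_eq] at hstage
    simpa only [Set.iSup_eq_iUnion, Set.mem_iUnion, exists_prop] using hstage
  have hsub : stage o ⊆ {b ∈ f.lfp | r b < r a} := fun b hb =>
    ⟨lfpApprox_le_of_mem_fixedPoints f f.map_lfp bot_le o hb, (r_le hb).trans_lt ho⟩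
  exact f.mono hsub hao

/-- A strategy, in the sense of `GStrategy`, on an arbitrary graph with edge relation `R`, for the
player who owns the vertices in `own`. -/
structure Strategy {V : Type*} (R : V → V → Prop) (own : V → Prop) where
  choose : List V → V → V
  choose_succ : ∀ h v, own v → (∃ u, R v u) → R v (choose h v)

theorem Strategy.exists_prefer {V : Type*} (R : V → V → Prop) (own : V → Prop)
    (P : V → V → Prop) :
    ∃ s : Strategy R own, ∀ h v, (∃ u, R v u ∧ P v u) → P v (s.choose h v) := by
  have hmove : ∀ v, ∃ u, ((∃ u, R v u) → R v u) ∧ ((∃ u, R v u ∧ P v u) → P v u) := by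
    intro v
    by_cases hP : ∃ u, R v u ∧ P v u
    · obtain ⟨u, hR, hP⟩ := hP
      exact ⟨u, fun _ => hR, fun _ => hP⟩
    · by_cases hR : ∃ u, R v u
      · obtain ⟨u, hR⟩ := hR
        exact ⟨u, fun _ => hR, fun h => (hP h).elim⟩
      · exact ⟨v, fun h => (hR h).elim, fun h => (hP h).elim⟩
  choose f hR hP using hmove
  exact ⟨⟨fun _ => f, fun _ v _ => hR v⟩, fun _ => hP⟩

section Reachability

variable {V : Type*} {R : V → V → Prop} {demonic : V → Prop}

/-- `Visits π σ v₀ h v`: the maximal path from `v₀` determined by `π` and `σ` visits `v`, having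
passed through the vertices in `h` before. -/
inductive Visits (π : Strategy R demonic) (σ : Strategy R fun v => ¬ demonic v) (v₀ : V) :
    List V → V → Prop
  | init : Visits π σ v₀ [] v₀
  | step {h v} : Visits π σ v₀ h v → (∃ u, R v u) →
      Visits π σ v₀ (h ++ [v]) (if demonic v then π.choose h v else σ.choose h v)

/-- The set of vertices on the maximal path from `v₀` determined by `π` and `σ`. -/
def visited (π : Strategy R demonic) (σ : Strategy R fun v => ¬ demonic v) (v₀ : V) : Set V :=
  {v | ∃ h, Visits π σ v₀ h v}

/-- The operator whose iterates build attractors: `forcePre R demonic S` consists of the vertices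
from which Demon can force the next move to exist and to lead into `S`. -/
def forcePre (R : V → V → Prop) (demonic : V → Prop) : Set V →o Set V where
  toFun S := {v | (∃ u, R v u) ∧ (demonic v → ∃ u, R v u ∧ u ∈ S) ∧
    (¬ demonic v → ∀ u, R v u → u ∈ S)}
  monotone' _ _ hST _ hv := ⟨hv.1, fun hd => (hv.2.1 hd).imp fun _ => And.imp_right (@hST _),
    fun hd u hu => hST (hv.2.2 hd u hu)⟩

/-- Demon's attractor of `T`: the vertices from which he can force a visit to `T`. As the least
fixed point is taken among all sets, this is also correct when finitely many iterations of
`forcePre` do not suffice. -/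
def attractor (R : V → V → Prop) (demonic : V → Prop) (T : Set V) : Set V :=
  (OrderHom.const _ T ⊔ forcePre R demonic).lfp

variable {T : Set V}

theorem attractor_eq :
    attractor R demonic T = T ∪ forcePre R demonic (attractor R demonic T) :=
  (OrderHom.map_lfp _).symm

theorem subset_attractor : T ⊆ attractor R demonic T :=
  Set.subset_union_left.trans attractor_eq.superset

theorem forcePre_attractor_subset :
    forcePre R demonic (attractor R demonic T) ⊆ attractor R demonic T :=
  Set.subset_union_right.trans attractor_eq.superset

theorem exists_demonStrategy_visited_inter_nonempty (R : V → V → Prop) (demonic : V → Prop)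
    (T : Set V) :
    ∃ π : Strategy R demonic, ∀ (σ : Strategy R fun v => ¬ demonic v),
      ∀ v₀ ∈ attractor R demonic T, (visited π σ v₀ ∩ T).Nonempty := by
  obtain ⟨r, hr⟩ := exists_ordinal_rank_of_lfp (OrderHom.const _ T ⊔ forcePre R demonic)
  obtain ⟨π, hπ⟩ := Strategy.exists_prefer R demonic
    fun v u => u ∈ {u ∈ attractor R demonic T | r u < r v}
  refine ⟨π, fun σ v₀ hv₀ => ?_⟩
  suffices H : ∀ v ∈ attractor R demonic T, ∀ h, Visits π σ v₀ h v → (visited π σ v₀ ∩ T).Nonempty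
    from H v₀ hv₀ [] .init
  intro v
  induction v using (InvImage.wf r wellFounded_lt).induction with | _ v ih
  intro hv h hvis
  rcases hr v hv with hvT | ⟨hsucc, hdem, hang⟩
  · exact ⟨v, ⟨h, hvis⟩, hvT⟩
  · have hnext : (if demonic v then π.choose h v else σ.choose h v) ∈
        {u ∈ attractor R demonic T | r u < r v} := by
      split_ifs with hd
      · exact hπ h v (hdem hd)
      · exact hang hd _ (σ.choose_succ h v hd hsucc)
    exact ih _ hnext.2 hnext.1 _ (hvis.step hsucc)

theorem exists_angelStrategy_disjoint_visited_attractor (R : V → V → Prop) (demonic : V → Prop)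
    (T : Set V) :
    ∃ σ : Strategy R fun v => ¬ demonic v, ∀ (π : Strategy R demonic),
      ∀ v₀ ∉ attractor R demonic T, Disjoint (visited π σ v₀) (attractor R demonic T) := by
  obtain ⟨σ, hσ⟩ := Strategy.exists_prefer R (fun v => ¬ demonic v)
    fun _ u => u ∉ attractor R demonic T
  refine ⟨σ, fun π v₀ hv₀ => Set.disjoint_left.2 ?_⟩
  rintro v ⟨h, hvis⟩
  induction hvis with
  | init => exact hv₀
  | @step h v _ hsucc ih =>
    have hv : v ∉ forcePre R demonic (attractor R demonic T) :=
      fun hv => ih (forcePre_attractor_subset hv)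
    split_ifs with hd
    · exact fun hmem =>
        hv ⟨hsucc, fun _ => ⟨_, π.choose_succ h v hd hsucc, hmem⟩, fun hn => (hn hd).elim⟩
    · refine hσ h v ?_
      by_contra! hall
      exact hv ⟨hsucc, fun hn => (hd hn).elim, fun _ => hall⟩

theorem reachability_determined (R : V → V → Prop) (demonic : V → Prop) (T : Set V) (v₀ : V) :
    (∃ π : Strategy R demonic, ∀ σ : Strategy R fun v => ¬ demonic v,
      (visited π σ v₀ ∩ T).Nonempty) ∨
    ∃ σ : Strategy R fun v => ¬ demonic v, ∀ π : Strategy R demonic,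
      Disjoint (visited π σ v₀) T := by
  by_cases hv₀ : v₀ ∈ attractor R demonic T
  · obtain ⟨π, hπ⟩ := exists_demonStrategy_visited_inter_nonempty R demonic T
    exact .inl ⟨π, fun σ => hπ σ v₀ hv₀⟩
  · obtain ⟨σ, hσ⟩ := exists_angelStrategy_disjoint_visited_attractor R demonic T
    exact .inr ⟨σ, fun π => (hσ π v₀ hv₀).mono_right subset_attractor⟩

end Reachability

/-- `mmax[c](α^{σ,π})`, for costs `c` in an arbitrary complete lattice. -/
def mmax {V L : Type*} [CompleteLattice L] {R : V → V → Prop} {demonic : V → Prop} (c : V → L)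
    (π : Strategy R demonic) (σ : Strategy R fun v => ¬ demonic v) (v₀ : V) : L :=
  ⨆ v ∈ visited π σ v₀, c v

theorem countable_game_determinacy_general {V L : Type*} [CompleteLinearOrder L]
    (R : V → V → Prop) (demonic : V → Prop) (c : V → L) (v₀ : V) :
    (⨆ π : Strategy R demonic, ⨅ σ : Strategy R fun v => ¬ demonic v, mmax c π σ v₀) =
      ⨅ σ : Strategy R fun v => ¬ demonic v, ⨆ π : Strategy R demonic, mmax c π σ v₀ := by
  refine iSup_iInf_eq_iInf_iSup_of_threshold _ fun b => ?_
  refine (reachability_determined R demonic {v | b < c v} v₀).imp ?_ ?_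
  · rintro ⟨π, hπ⟩
    refine ⟨π, fun σ => ?_⟩
    obtain ⟨v, hvis, hv⟩ := hπ σ
    exact hv.trans_le (le_iSup₂_of_le v hvis le_rfl)
  · rintro ⟨σ, hσ⟩
    exact ⟨σ, fun π => iSup₂_le fun v hvis => not_lt.1 (Set.disjoint_left.1 (hσ π) hvis)⟩

/-- A strategy in a `CGame`, regarded as a `Strategy` on its graph. -/
def GStrategy.toStrategy {G : CGame} {own : G.V → Prop} (s : GStrategy G own) :
    Strategy G.R own :=
  ⟨s.choose, s.choose_succ⟩

theorem GStrategy.toStrategy_surjective (G : CGame) (own : G.V → Prop) :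
    (toStrategy : GStrategy G own → Strategy G.R own).Surjective :=
  fun s => ⟨⟨s.choose, s.choose_succ⟩, rfl⟩

theorem exists_gplayAux_eq_some_iff {G : CGame} (σ : GAngelStrategy G) (π : GDemonStrategy G)
    (v₀ : G.V) (h : List G.V) (v : G.V) :
    (∃ n, gplayAux σ π v₀ n = some (h, v)) ↔
      Visits π.toStrategy σ.toStrategy v₀ h v := by
  constructor
  · rintro ⟨n, hn⟩
    induction n generalizing h v with
    | zero =>
      cases hn
      exact .init
    | succ n ih =>
      obtain ⟨⟨h', w⟩, hw, hn⟩ := Option.bind_eq_some_iff.1 hn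
      obtain ⟨hsucc, hn⟩ := Option.ite_none_right_eq_some.1 hn
      cases hn
      exact (ih h' w hw).step hsucc
  · intro hvis
    induction hvis with
    | init => exact ⟨0, rfl⟩
    | step _ hsucc ih =>
      obtain ⟨n, hn⟩ := ih
      exact ⟨n + 1, by rw [gplayAux, hn, Option.bind_some, if_pos hsucc]; rfl⟩

theorem mmax_toStrategy {G : CGame} (σ : GAngelStrategy G) (π : GDemonStrategy G) (v₀ : G.V) :
    mmax (fun v => (G.cost v : ℕ∞)) π.toStrategy σ.toStrategy v₀ = gmmax σ π v₀ := by
  simp only [mmax, gmmax, visited, ← exists_gplayAux_eq_some_iff, exists_comm (α := ℕ)]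

/-- For every game `G = (V, →, c)` with countably many vertices and a
finitely-branching transition relation, and every initial vertex `v̂`:
`sup_π inf_σ mmax[c](α^{σ,π}) = inf_σ sup_π mmax[c](α^{σ,π})` in `ℕ∞`. -/
theorem countable_game_determinacy (G : CGame) (vhat : G.V) :
    (⨆ π : GDemonStrategy G, ⨅ σ : GAngelStrategy G, gmmax σ π vhat) =
      ⨅ σ : GAngelStrategy G, ⨆ π : GDemonStrategy G, gmmax σ π vhat :=
  iSup_iInf_eq_iInf_iSup_of_surjective (GStrategy.toStrategy_surjective G _)
    (GStrategy.toStrategy_surjective G _) (fun π σ => mmax_toStrategy σ π vhat)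
    (countable_game_determinacy_general G.R G.demonic (fun v => (G.cost v : ℕ∞)) vhat)

end
end VassPaperGames
end

section
/- Let G = (V, →, c) be a game where V is a countable set of vertices partitioned into demonic vertices V_D and angelic vertices V_A, → ⊆ V × V is finitely branching, and c : V → ℕ. Let Γ : ℕ∞^V → ℕ∞^V be defined by Γ(f)(v) = max{c(v), max{f(u) : v → u}} for v ∈ V_D and Γ(f)(v) = max{c(v), min{f(u) : v → u}} for v ∈ V_A (where max/min over the empty set of successors is taken so that Γ(f)(v) = c(v) for terminal v). Then Γ has a least fixed point μΓ, and for every vertex v̂ ∈ V, μΓ(v̂) = sup_π inf_σ mmax[c](α^{σ,π}) = inf_σ sup_π mmax[c](α^{σ,π}), where π ranges over Demon strategies and σ over Angel strategies for initial vertex v̂. -/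
/-!
The lower value `sup_π inf_σ` is a pre-fixed point of `Γ`: against each threshold it exceeds, Demon
makes or awaits the first move and then follows a strategy exceeding that threshold from the
vertex reached. The upper value `inf_σ sup_π` lies below every pre-fixed point `f`: Angel keeps `f`
below any threshold that it is below initially, and `f` dominates the cost. Hence
`μΓ ≤ sup_π inf_σ ≤ inf_σ sup_π ≤ μΓ`. Arguing with thresholds instead of optimal moves, which need
not exist, makes the proof work for infinite branching and for costs in any complete linear order.
-/

open scoped Classical

namespace VassPaperGames

noncomputable section

theorem le_iSup_iInf_iff {ι κ L : Type*} [CompleteLinearOrder L] {F : ι → κ → L} {a : L} :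
    a ≤ ⨆ i, ⨅ j, F i j ↔ ∀ k < a, ∃ i, ∀ j, k < F i j := by
  refine ⟨fun ha k hk => ?_, fun h => ?_⟩
  · obtain ⟨i, hi⟩ := lt_iSup_iff.1 (hk.trans_le ha)
    exact ⟨i, fun j => hi.trans_le (iInf_le _ j)⟩
  · by_contra! hlt
    obtain ⟨d, hd, k, hk, hsep⟩ := hlt.exists_disjoint_Iio_Ioi
    obtain ⟨i, hi⟩ := h k hk
    have hle (j : κ) : d ≤ F i j := le_of_not_gt fun hj => (hsep _ hj _ (hi j)).false
    exact (hd.trans_le (le_iSup_of_le i (le_iInf hle))).false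

/-- A strategy for the owner of the vertices in `own`, on a graph with edge relation `R`; as in
`GStrategy`, a finite path is given by its strict past and its last vertex. -/
structure Strategy_s15 {V : Type*} (R : V → V → Prop) (own : V → Prop) where
  choose : List V → V → V
  choose_adj : ∀ h v, own v → (∃ u, R v u) → R v (choose h v)

namespace Strategy_s15

variable {V : Type*} {R : V → V → Prop} {own : V → Prop}

theorem exists_choose_mem (R : V → V → Prop) (own : V → Prop) (S : Set V) :
    ∃ s : Strategy_s15 R own, ∀ h v u, R v u → u ∈ S → s.choose h v ∈ S := by
  have hmove (v : V) :
      ∃ w, ((∃ u, R v u) → R v w) ∧ ∀ u, R v u → u ∈ S → w ∈ S := by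
    by_cases hS : ∃ u, R v u ∧ u ∈ S
    · obtain ⟨w, hvw, hw⟩ := hS
      exact ⟨w, fun _ => hvw, fun _ _ _ => hw⟩
    · have hvacuous (w u : V) (hvu : R v u) (hu : u ∈ S) : w ∈ S := (hS ⟨u, hvu, hu⟩).elim
      by_cases hv : ∃ u, R v u
      · obtain ⟨w, hvw⟩ := hv
        exact ⟨w, fun _ => hvw, hvacuous w⟩
      · exact ⟨v, fun h => (hv h).elim, hvacuous v⟩
  choose move hadj hmem using hmove
  exact ⟨⟨fun _ => move, fun _ v _ => hadj v⟩, fun _ => hmem⟩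

instance : Nonempty (Strategy_s15 R own) :=
  (exists_choose_mem R own Set.univ).nonempty

/-- The strategy that `s` induces on the rest of the play once it has left its initial
vertex `v`. -/
def after (s : Strategy_s15 R own) (v : V) : Strategy_s15 R own where
  choose h w := s.choose (v :: h) w
  choose_adj h w := s.choose_adj (v :: h) w

/-- The strategy that makes the first move according to `s` and afterwards follows `P u`, where `u`
is the second vertex of the play. In a path with strict past `x :: h` and last vertex `w`, this
vertex is `h.headD w`. -/
def handOver (s : Strategy_s15 R own) (P : V → Strategy_s15 R own) : Strategy_s15 R own where
  choose
    | [], w => s.choose [] w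
    | _ :: h, w => (P (h.headD w)).choose h w
  choose_adj
    | [], w => s.choose_adj [] w
    | _ :: h, w => (P (h.headD w)).choose_adj h w

end Strategy_s15

/-- A game as in `CGame`, but with arbitrarily many vertices, arbitrary branching and costs in an
arbitrary type. -/
structure CostArena (V L : Type*) where
  demonic : V → Prop
  R : V → V → Prop
  cost : V → L

namespace CostArena

variable {V L : Type*} {A : CostArena V L}

/-- Angel's strategies; Angel owns the vertices that are not demonic. -/
abbrev AngelStrategy (A : CostArena V L) := Strategy_s15 A.R (fun v => ¬ A.demonic v)

/-- Demon's strategies; Demon owns the demonic vertices. -/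
abbrev DemonStrategy (A : CostArena V L) := Strategy_s15 A.R A.demonic

/-- The move made from `v` with strict past `h`, a junk value if `v` is terminal. -/
def next (σ : A.AngelStrategy) (π : A.DemonStrategy) (h : List V) (v : V) : V :=
  if A.demonic v then π.choose h v else σ.choose h v

/-- `Visits σ π v₀ h v` says that `h` followed by `v` is a finite prefix of the maximal path
`α^{σ,π}` from `v₀`. -/
inductive Visits (σ : A.AngelStrategy) (π : A.DemonStrategy) (v₀ : V) : List V → V → Prop
  | start : Visits σ π v₀ [] v₀
  | step {h : List V} {v : V} :
      Visits σ π v₀ h v → (∃ u, A.R v u) → Visits σ π v₀ (h ++ [v]) (next σ π h v)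

section Play

variable {σ : A.AngelStrategy} {π π' : A.DemonStrategy} {h : List V} {v w : V}

theorem next_of_demonic (hd : A.demonic v) : next σ π h v = π.choose h v :=
  if_pos hd

theorem next_of_not_demonic (hd : ¬ A.demonic v) : next σ π h v = σ.choose h v :=
  if_neg hd

theorem adj_next (σ : A.AngelStrategy) (π : A.DemonStrategy) (h : List V)
    (hv : ∃ u, A.R v u) : A.R v (next σ π h v) := by
  by_cases hd : A.demonic v
  · exact next_of_demonic hd ▸ π.choose_adj h v hd hv
  · exact next_of_not_demonic hd ▸ σ.choose_adj h v hd hv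

theorem Visits.headD_eq (hw : Visits σ π v h w) : h.headD w = v := by
  induction hw with
  | start => rfl
  | @step h _ _ _ ih => cases h <;> exact ih

theorem Visits.congr (hw : Visits σ π v h w)
    (hππ' : ∀ h w, h.headD w = v → π.choose h w = π'.choose h w) : Visits σ π' v h w := by
  induction hw with
  | start => exact .start
  | @step h w hw hadj ih =>
    have hnext : next σ π h w = next σ π' h w := by
      simp only [next, hππ' h w hw.headD_eq]
    exact hnext ▸ ih.step hadj

theorem Visits.of_after (hv : ∃ u, A.R v u)
    (hw : Visits (σ.after v) (π.after v) (next σ π [] v) h w) : Visits σ π v (v :: h) w := by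
  induction hw with
  | start => exact Visits.start.step hv
  | step _ hadj ih => exact ih.step hadj

end Play

section CompleteLattice

variable [CompleteLattice L]

/-- `mmax[c](α^{σ,π})` for the maximal path from `v`. -/
def mmax (σ : A.AngelStrategy) (π : A.DemonStrategy) (v : V) : L :=
  ⨆ w ∈ {w | ∃ h, Visits σ π v h w}, A.cost w

/-- The lower value `sup_π inf_σ mmax[c](α^{σ,π})` of the game from `v`. -/
def lowerValue (A : CostArena V L) (v : V) : L :=
  ⨆ π : A.DemonStrategy, ⨅ σ : A.AngelStrategy, mmax σ π v

/-- The upper value `inf_σ sup_π mmax[c](α^{σ,π})` of the game from `v`. -/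
def upperValue (A : CostArena V L) (v : V) : L :=
  ⨅ σ : A.AngelStrategy, ⨆ π : A.DemonStrategy, mmax σ π v

theorem lowerValue_le_upperValue (A : CostArena V L) : A.lowerValue ≤ A.upperValue :=
  fun _ => iSup_iInf_le_iInf_iSup _

/-- The operator `Γ`, bundled with its monotonicity. Over infinitely many successors, max and min
become supremum and infimum. -/
def bellman (A : CostArena V L) : (V → L) →o (V → L) where
  toFun f v :=
    if ∃ u, A.R v u then
      A.cost v ⊔ (if A.demonic v then ⨆ u ∈ {u | A.R v u}, f u else ⨅ u ∈ {u | A.R v u}, f u)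
    else A.cost v
  monotone' f g hfg v := by
    dsimp only
    split_ifs
    · exact sup_le_sup_left (iSup₂_mono fun u _ => hfg u) _
    · exact sup_le_sup_left (iInf₂_mono fun u _ => hfg u) _
    · exact le_rfl

variable {f : V → L} {v : V}

theorem bellman_of_terminal (hv : ¬ ∃ u, A.R v u) : A.bellman f v = A.cost v :=
  if_neg hv

theorem bellman_of_demonic (hv : ∃ u, A.R v u) (hd : A.demonic v) :
    A.bellman f v = A.cost v ⊔ ⨆ u ∈ {u | A.R v u}, f u :=
  (if_pos hv).trans (by rw [if_pos hd])

theorem bellman_of_not_demonic (hv : ∃ u, A.R v u) (hd : ¬ A.demonic v) :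
    A.bellman f v = A.cost v ⊔ ⨅ u ∈ {u | A.R v u}, f u :=
  (if_pos hv).trans (by rw [if_neg hd])

theorem cost_le_bellman (A : CostArena V L) (f : V → L) (v : V) : A.cost v ≤ A.bellman f v := by
  by_cases hv : ∃ u, A.R v u
  · exact le_sup_left.trans_eq (if_pos hv).symm
  · exact (bellman_of_terminal hv).ge

theorem cost_le_mmax {σ : A.AngelStrategy} {π : A.DemonStrategy} {h : List V} {w : V}
    (hw : Visits σ π v h w) : A.cost w ≤ mmax σ π v :=
  le_iSup₂_of_le w ⟨h, hw⟩ le_rfl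

theorem mmax_after_le {σ : A.AngelStrategy} {π : A.DemonStrategy} (hv : ∃ u, A.R v u) :
    mmax (σ.after v) (π.after v) (next σ π [] v) ≤ mmax σ π v :=
  iSup₂_le fun _ ⟨_, hw⟩ => cost_le_mmax (hw.of_after hv)

theorem mmax_le_mmax_handOver_after (σ : A.AngelStrategy) (π : A.DemonStrategy)
    (P : V → A.DemonStrategy) (v u : V) :
    mmax σ (P u) u ≤ mmax σ ((π.handOver P).after v) u :=
  iSup₂_le fun _ ⟨_, hw⟩ => cost_le_mmax <| hw.congr fun h w hu =>
    congrArg (fun x => (P x).choose h w) hu.symm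

/-- Demon has a strategy that makes every play from `v` cost more than `k`. -/
def Exceeds (A : CostArena V L) (k : L) (v : V) : Prop :=
  ∃ π : A.DemonStrategy, ∀ σ : A.AngelStrategy, k < mmax σ π v

variable {k : L}

theorem Exceeds.of_lt_cost (hk : k < A.cost v) : A.Exceeds k v :=
  ⟨Classical.arbitrary _, fun _ => hk.trans_le (cost_le_mmax .start)⟩

theorem Exceeds.of_next (hv : ∃ u, A.R v u) (π₀ : A.DemonStrategy)
    (hnext : ∀ σ : A.AngelStrategy, A.Exceeds k (next σ π₀ [] v)) : A.Exceeds k v := by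
  choose! P hP using fun u (hu : A.Exceeds k u) => hu
  refine ⟨π₀.handOver P, fun σ => ?_⟩
  let u := next σ π₀ [] v
  calc
    k < mmax (σ.after v) (P u) u := hP u (hnext σ) (σ.after v)
    _ ≤ mmax (σ.after v) ((π₀.handOver P).after v) u := mmax_le_mmax_handOver_after ..
    _ ≤ mmax σ (π₀.handOver P) v := mmax_after_le hv

theorem Exceeds.of_demonic {u : V} (hd : A.demonic v) (hvu : A.R v u) (hu : A.Exceeds k u) :
    A.Exceeds k v := by
  obtain ⟨π₀, hπ₀⟩ := Strategy_s15.exists_choose_mem A.R A.demonic {u}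
  have hmove : π₀.choose [] v = u := hπ₀ [] v u hvu rfl
  refine .of_next ⟨u, hvu⟩ π₀ fun σ => ?_
  rwa [next_of_demonic hd, hmove]

theorem Exceeds.of_forall_adj (hv : ∃ u, A.R v u) (h : ∀ u, A.R v u → A.Exceeds k u) :
    A.Exceeds k v :=
  .of_next hv (Classical.arbitrary _) fun σ => h _ (adj_next σ _ [] hv)

end CompleteLattice

section CompleteLinearOrder

variable [CompleteLinearOrder L] {f : V → L} {v : V}

theorem le_lowerValue_iff {a : L} : a ≤ A.lowerValue v ↔ ∀ k < a, A.Exceeds k v :=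
  le_iSup_iInf_iff

theorem bellman_lowerValue_le (A : CostArena V L) : A.bellman A.lowerValue ≤ A.lowerValue := by
  refine fun v => le_lowerValue_iff.2 fun k hk => ?_
  have exceeds_of_lt {u : V} (hu : k < A.lowerValue u) : A.Exceeds k u :=
    le_lowerValue_iff.1 le_rfl k hu
  by_cases hv : ∃ u, A.R v u
  · by_cases hd : A.demonic v
    · rw [bellman_of_demonic hv hd, lt_sup_iff] at hk
      rcases hk with hcost | hsup
      · exact .of_lt_cost hcost
      · obtain ⟨u, hvu, hu⟩ := lt_biSup_iff.1 hsup
        exact .of_demonic hd hvu (exceeds_of_lt hu)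
    · rw [bellman_of_not_demonic hv hd, lt_sup_iff] at hk
      rcases hk with hcost | hinf
      · exact .of_lt_cost hcost
      · exact .of_forall_adj hv fun u hvu => exceeds_of_lt (hinf.trans_le (iInf₂_le u hvu))
  · exact .of_lt_cost (hk.trans_eq (bellman_of_terminal hv))

theorem exists_forall_next_lt (hf : A.bellman f ≤ f) (b : L) :
    ∃ σ : A.AngelStrategy, ∀ (π : A.DemonStrategy) (h : List V) (v : V),
      (∃ u, A.R v u) → f v < b → f (next σ π h v) < b := by
  obtain ⟨σ, hσ⟩ := Strategy_s15.exists_choose_mem A.R (fun v => ¬ A.demonic v) {u | f u < b}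
  refine ⟨σ, fun π h v hv hvb => ?_⟩
  have hbellman : A.bellman f v < b := (hf v).trans_lt hvb
  by_cases hd : A.demonic v
  · rw [bellman_of_demonic hv hd] at hbellman
    have hnext : f (next σ π h v) ≤ ⨆ u ∈ {u | A.R v u}, f u :=
      le_biSup f (adj_next σ π h hv)
    exact hnext.trans_lt (le_sup_right.trans_lt hbellman)
  · rw [bellman_of_not_demonic hv hd] at hbellman
    simp only [sup_lt_iff, iInf_lt_iff] at hbellman
    obtain ⟨-, u, hvu, hub⟩ := hbellman
    rw [next_of_not_demonic hd]
    exact hσ h v u hvu hub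

theorem exists_forall_visits_lt (hf : A.bellman f ≤ f) {b : L} (hv : f v < b) :
    ∃ σ : A.AngelStrategy, ∀ (π : A.DemonStrategy) (h : List V) (w : V),
      Visits σ π v h w → f w < b := by
  obtain ⟨σ, hσ⟩ := exists_forall_next_lt hf b
  refine ⟨σ, fun π h w hw => ?_⟩
  induction hw with
  | start => exact hv
  | step _ hadj ih => exact hσ π _ _ hadj ih

theorem upperValue_le_of_bellman_le (hf : A.bellman f ≤ f) : A.upperValue ≤ f := by
  intro v
  by_contra! hlt
  obtain ⟨d, hd, k, hk, hsep⟩ := hlt.exists_disjoint_Iio_Ioi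
  obtain ⟨σ, hσ⟩ := exists_forall_visits_lt hf hd
  -- Costs below `d` are even at most `k`, and only such a weak bound passes to the supremum.
  have hcost (π : A.DemonStrategy) (h : List V) (w : V) (hw : Visits σ π v h w) :
      A.cost w ≤ k := by
    have hwd : A.cost w < d := ((cost_le_bellman A f w).trans (hf w)).trans_lt (hσ π h w hw)
    exact le_of_not_gt fun hkw => (hsep _ hwd _ hkw).false
  have hupper : A.upperValue v ≤ k :=
    iInf_le_of_le σ <| iSup_le fun π => iSup₂_le fun w ⟨h, hw⟩ => hcost π h w hw
  exact (hk.trans_le hupper).false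

end CompleteLinearOrder

end CostArena

theorem bellman_lfp_value_general {V L : Type*} [CompleteLinearOrder L] (A : CostArena V L) :
    ∃ μ : V → L, IsLeast (Function.fixedPoints A.bellman) μ ∧
      ∀ v : V, μ v = A.lowerValue v ∧ μ v = A.upperValue v := by
  have hlower : A.bellman.lfp ≤ A.lowerValue := A.bellman.lfp_le A.bellman_lowerValue_le
  have hvalues : A.lowerValue ≤ A.upperValue := A.lowerValue_le_upperValue
  have hupper : A.upperValue ≤ A.bellman.lfp :=
    CostArena.upperValue_le_of_bellman_le A.bellman.map_lfp.le
  exact ⟨A.bellman.lfp, A.bellman.isLeast_lfp, fun v =>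
    ⟨(hlower v).antisymm ((hvalues.trans hupper) v),
      ((hlower.trans hvalues) v).antisymm (hupper v)⟩⟩

/-- The game `G` with its costs regarded as elements of `ℕ∞`; the operator
`G.toCostArena.bellman` unfolds to `Gamma G`. -/
def CGame.toCostArena (G : CGame) : CostArena G.V ℕ∞ where
  demonic := G.demonic
  R := G.R
  cost v := G.cost v

/-- The identification of the strategies in `G` with those in `G.toCostArena`. -/
def GStrategy.equivStrategy {G : CGame} {own : G.V → Prop} :
    GStrategy G own ≃ Strategy_s15 G.R own where
  toFun s := ⟨s.choose, s.choose_succ⟩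
  invFun s := ⟨s.choose, s.choose_adj⟩

section Transfer

variable {G : CGame}

theorem visits_equivStrategy_iff {σ : GAngelStrategy G} {π : GDemonStrategy G} {v w : G.V}
    {h : List G.V} :
    CostArena.Visits (A := G.toCostArena) σ.equivStrategy π.equivStrategy v h w ↔
      ∃ n, gplayAux σ π v n = some (h, w) := by
  constructor
  · intro hw
    induction hw with
    | start => exact ⟨0, rfl⟩
    | step _ hadj ih =>
      obtain ⟨n, hn⟩ := ih
      refine ⟨n + 1, ?_⟩
      rw [gplayAux, hn]
      exact if_pos hadj
  · rintro ⟨n, hn⟩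
    induction n generalizing h w with
    | zero =>
      obtain ⟨rfl, rfl⟩ := Prod.mk.inj (Option.some.inj hn)
      exact .start
    | succ n ih =>
      obtain ⟨⟨h', u⟩, hu, hstep⟩ := Option.bind_eq_some_iff.1 hn
      obtain ⟨hadj, heq⟩ := Option.ite_none_right_eq_some.1 hstep
      obtain ⟨rfl, rfl⟩ := Prod.mk.inj (Option.some.inj heq)
      exact (ih hu).step hadj

theorem mmax_equivStrategy (σ : GAngelStrategy G) (π : GDemonStrategy G) (v : G.V) :
    CostArena.mmax (A := G.toCostArena) σ.equivStrategy π.equivStrategy v = gmmax σ π v := by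
  simp only [CostArena.mmax, gmmax, visits_equivStrategy_iff, exists_comm (α := List G.V)]
  rfl

theorem lowerValue_toCostArena (v : G.V) :
    G.toCostArena.lowerValue v =
      ⨆ π : GDemonStrategy G, ⨅ σ : GAngelStrategy G, gmmax σ π v :=
  (GStrategy.equivStrategy.iSup_congr fun π =>
    (GStrategy.equivStrategy.iInf_congr fun σ => mmax_equivStrategy σ π v).symm).symm

theorem upperValue_toCostArena (v : G.V) :
    G.toCostArena.upperValue v =
      ⨅ σ : GAngelStrategy G, ⨆ π : GDemonStrategy G, gmmax σ π v :=
  (GStrategy.equivStrategy.iInf_congr fun σ =>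
    (GStrategy.equivStrategy.iSup_congr fun π => mmax_equivStrategy σ π v).symm).symm

end Transfer

/-- The Bellman operator `Γ` has a least fixed point `μΓ`, and for every
vertex `v̂`, `μΓ(v̂) = sup_π inf_σ mmax[c](α^{σ,π}) = inf_σ sup_π mmax[c](α^{σ,π})`. -/
theorem bellman_lfp_value (G : CGame) :
    ∃ μ : G.V → ℕ∞, (Gamma G μ = μ ∧ ∀ g : G.V → ℕ∞, Gamma G g = g → μ ≤ g) ∧
      ∀ vhat : G.V,
        μ vhat = (⨆ π : GDemonStrategy G, ⨅ σ : GAngelStrategy G, gmmax σ π vhat) ∧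
        μ vhat = (⨅ σ : GAngelStrategy G, ⨆ π : GDemonStrategy G, gmmax σ π vhat) := by
  obtain ⟨μ, hμ, hvalue⟩ := bellman_lfp_value_general G.toCostArena
  simp only [lowerValue_toCostArena, upperValue_toCostArena] at hvalue
  exact ⟨μ, ⟨hμ.1, fun _ hg => hμ.2 hg⟩, hvalue⟩

end
end VassPaperGames
end
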